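/- Let n >= 1 be an integer. Assume mu_1 and mu'_2 are unramified and mu_2 is trivial on 1 + p^n Z_p. Let h : G -> C be a function such that h(t*g) = chi_1(t) * chi'_2(t) * h(g) for all t in T and g in G, h(j) = 1 for all j in J_n, and h(g) = 0 whenever g is not of the form t*j with t in T and j in J_n. Let H : G × G -> C be a function such that H(b_1*g_1, b_2*g_2) = chi_1(b_1) * chi_2(b_2) * delta(b_1*b_2)^{1/2} * H(g_1,g_2) for all b_1, b_2 in B and g_1, g_2 in G, and such that H(g,g) = 0 and H(g, w*g) = h(g) for all g in G. Then for all k_1 = [[*,*],[c_1,d_1]] and k_2 = [[*,*],[c_2,d_2]] in K: H(k_1,k_2) = mu'_1(d_1) * mu_2(-det(k_2)/c_2) if k_1 lies in I_n and k_2 lies in K \ I, and H(k_1,k_2) = 0 otherwise. -/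

import Mathlib

open Matrix

noncomputable section

variable (p : ℕ) [Fact p.Prime]

/-- The underlying matrix of an element of `GL₂(ℚ_p)`. -/
def mat (g : GL (Fin 2) ℚ_[p]) : Matrix (Fin 2) (Fin 2) ℚ_[p] := g

/-- Membership in `K = GL₂(ℤ_p)`: all entries are `p`-adic integers and the
determinant is a unit of `ℤ_p`. -/
def inK (g : GL (Fin 2) ℚ_[p]) : Prop :=
  (∀ i j, ‖mat p g i j‖ ≤ 1) ∧ ‖(mat p g).det‖ = 1

/-- Membership in the Iwahori subgroup `I_n` of `K`: for `n = 0`, `I_0 = K`;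
for `n ≥ 1`, the diagonal entries are units of `ℤ_p` and the lower left entry
lies in `p^n ℤ_p`. -/
def inI (n : ℕ) (g : GL (Fin 2) ℚ_[p]) : Prop :=
  inK p g ∧ (n = 0 ∨
    (‖mat p g 0 0‖ = 1 ∧ ‖mat p g 1 1‖ = 1 ∧ ‖mat p g 1 0‖ ≤ (p : ℝ) ^ (-(n : ℤ))))

/-- `p` as a unit of `ℚ_p`. -/
def pu : ℚ_[p]ˣ :=
  Units.mk0 (p : ℚ_[p]) (by exact_mod_cast (Fact.out : p.Prime).ne_zero)

/-- The element `γ = diag(p⁻¹, 1)` of `GL₂(ℚ_p)`. -/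
def gamma : GL (Fin 2) ℚ_[p] :=
  Matrix.GeneralLinearGroup.mkOfDetNeZero !![(p : ℚ_[p])⁻¹, 0; 0, 1] (by
    have hp : (p : ℚ_[p]) ≠ 0 := by exact_mod_cast (Fact.out : p.Prime).ne_zero
    simp [Matrix.det_fin_two_of, hp])

/-- A character of `ℚ_p^×` is unramified if it is trivial on `ℤ_p^×`. -/
def Unramified (μ : ℚ_[p]ˣ →* ℂˣ) : Prop :=
  ∀ u : ℚ_[p]ˣ, ‖(u : ℚ_[p])‖ = 1 → μ u = 1

/-- A character of `ℚ_p^×` is trivial on `1 + p^j ℤ_p`. -/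
def TrivialOnOnePlusP (j : ℕ) (μ : ℚ_[p]ˣ →* ℂˣ) : Prop :=
  ∀ u : ℚ_[p]ˣ, ‖(u : ℚ_[p]) - 1‖ ≤ (p : ℝ) ^ (-(j : ℤ)) → μ u = 1

/-- The Weyl element `w = [[0,1],[1,0]]` of `GL₂(ℚ_p)`. -/
def wEl : GL (Fin 2) ℚ_[p] :=
  Matrix.GeneralLinearGroup.mkOfDetNeZero !![(0 : ℚ_[p]), 1; 1, 0] (by
    simp [Matrix.det_fin_two_of])

/-- Membership in the diagonal torus `T` of `GL₂(ℚ_p)`. -/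
def inT (g : GL (Fin 2) ℚ_[p]) : Prop := mat p g 1 0 = 0 ∧ mat p g 0 1 = 0

/-- Membership in `J_n = [[1, ℤ_p], [p^n ℤ_p, 1]]`. -/
def inJ (n : ℕ) (g : GL (Fin 2) ℚ_[p]) : Prop :=
  mat p g 0 0 = 1 ∧ mat p g 1 1 = 1 ∧ ‖mat p g 0 1‖ ≤ 1 ∧
    ‖mat p g 1 0‖ ≤ (p : ℝ) ^ (-(n : ℤ))

theorem padic_sub_le (x y : ℚ_[p]) : ‖x - y‖ ≤ max ‖x‖ ‖y‖ := by
  rw [sub_eq_add_neg, ← norm_neg y]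
  exact IsUltrametricDist.norm_add_le_max x (-y)

theorem mat_mul_inv (k g : GL (Fin 2) ℚ_[p]) (i : Fin 2) :
    mat p (k * g⁻¹) i 0 =
      (mat p k i 0 * mat p g 1 1 - mat p k i 1 * mat p g 1 0) / (mat p g).det ∧
    mat p (k * g⁻¹) i 1 =
      (mat p k i 1 * mat p g 0 0 - mat p k i 0 * mat p g 0 1) / (mat p g).det := by
  have h : mat p (k * g⁻¹) = mat p k * (mat p g)⁻¹ := by
    simp [mat]
  rw [h, Matrix.inv_def, Matrix.adjugate_fin_two, Ring.inverse_eq_inv']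
  constructor
  · simp [Matrix.mul_apply, Fin.sum_univ_two]; ring
  · simp [Matrix.mul_apply, Fin.sum_univ_two]; ring

theorem mat_det_ne (g : GL (Fin 2) ℚ_[p]) : (mat p g).det ≠ 0 :=
  Matrix.GeneralLinearGroup.det_ne_zero g

theorem mat_mk (A : Matrix (Fin 2) (Fin 2) ℚ_[p]) (hA : A.det ≠ 0) :
    mat p (Matrix.GeneralLinearGroup.mkOfDetNeZero A hA) = A := rfl

theorem mat_mul (k g : GL (Fin 2) ℚ_[p]) : mat p (k * g) = mat p k * mat p g := rfl

theorem H_diag_case (μ₁ μ'₁ μ₂ μ'₂ : ℚ_[p]ˣ →* ℂˣ)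
    (H : GL (Fin 2) ℚ_[p] → GL (Fin 2) ℚ_[p] → ℂ)
    (hHB : ∀ (b₁ b₂ g₁ g₂ : GL (Fin 2) ℚ_[p]) (a₁ d₁ a₂ d₂ : ℚ_[p]ˣ),
      mat p b₁ 1 0 = 0 → mat p b₁ 0 0 = a₁ → mat p b₁ 1 1 = d₁ →
      mat p b₂ 1 0 = 0 → mat p b₂ 0 0 = a₂ → mat p b₂ 1 1 = d₂ →
      H (b₁ * g₁) (b₂ * g₂) =
        (μ₁ a₁ : ℂ) * (μ'₁ d₁ : ℂ) * (μ₂ a₂ : ℂ) * (μ'₂ d₂ : ℂ) *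
          (Real.sqrt ‖((a₁ : ℚ_[p]) * (a₂ : ℚ_[p])) /
            ((d₁ : ℚ_[p]) * (d₂ : ℚ_[p]))‖ : ℂ) * H g₁ g₂)
    (hHdiag : ∀ g : GL (Fin 2) ℚ_[p], H g g = 0)
    (k₁ k₂ : GL (Fin 2) ℚ_[p])
    (e0 : mat p k₂ 1 0 * mat p k₁ 1 1 - mat p k₂ 1 1 * mat p k₁ 1 0 = 0) :
    H k₁ k₂ = 0 := by
  have h10 : mat p (k₂ * k₁⁻¹) 1 0 = 0 := by
    rw [(mat_mul_inv p k₂ k₁ 1).1, e0, zero_div]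
  have hd := mat_det_ne p (k₂ * k₁⁻¹)
  rw [Matrix.det_fin_two, h10, mul_zero, sub_zero] at hd
  have := hHB 1 (k₂ * k₁⁻¹) k₁ k₁ 1 1 (Units.mk0 _ (left_ne_zero_of_mul hd))
    (Units.mk0 _ (right_ne_zero_of_mul hd)) (by simp [mat]) (by simp [mat]) (by simp [mat])
    h10 rfl rfl
  rw [hHdiag, mul_zero, one_mul, inv_mul_cancel_right] at this
  exact this

/-- The matrix with rows the bottom rows of `k₂` and `k₁`. -/
def gEl (k₁ k₂ : GL (Fin 2) ℚ_[p])
    (e0 : mat p k₂ 1 0 * mat p k₁ 1 1 - mat p k₂ 1 1 * mat p k₁ 1 0 ≠ 0) : GL (Fin 2) ℚ_[p] :=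
  Matrix.GeneralLinearGroup.mkOfDetNeZero
    !![mat p k₂ 1 0, mat p k₂ 1 1; mat p k₁ 1 0, mat p k₁ 1 1] (by
      rwa [Matrix.det_fin_two_of])

theorem borel_step (k g : GL (Fin 2) ℚ_[p]) (h0 : mat p k 1 0 = mat p g 1 0)
    (h1 : mat p k 1 1 = mat p g 1 1) :
    mat p (k * g⁻¹) 1 0 = 0 ∧ mat p (k * g⁻¹) 0 0 = (mat p k).det / (mat p g).det ∧
      mat p (k * g⁻¹) 1 1 = 1 := by
  have hd := mat_det_ne p g
  refine ⟨?_, ?_, ?_⟩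
  · rw [(mat_mul_inv p k g 1).1, h0, h1]; ring
  · rw [(mat_mul_inv p k g 0).1, Matrix.det_fin_two (mat p k), h0, h1]
  · rw [(mat_mul_inv p k g 1).2, h0, h1, div_eq_one_iff_eq hd, Matrix.det_fin_two]; ring

theorem H_open_case (μ₁ μ'₁ μ₂ μ'₂ : ℚ_[p]ˣ →* ℂˣ)
    (h : GL (Fin 2) ℚ_[p] → ℂ)
    (H : GL (Fin 2) ℚ_[p] → GL (Fin 2) ℚ_[p] → ℂ)
    (hHB : ∀ (b₁ b₂ g₁ g₂ : GL (Fin 2) ℚ_[p]) (a₁ d₁ a₂ d₂ : ℚ_[p]ˣ),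
      mat p b₁ 1 0 = 0 → mat p b₁ 0 0 = a₁ → mat p b₁ 1 1 = d₁ →
      mat p b₂ 1 0 = 0 → mat p b₂ 0 0 = a₂ → mat p b₂ 1 1 = d₂ →
      H (b₁ * g₁) (b₂ * g₂) =
        (μ₁ a₁ : ℂ) * (μ'₁ d₁ : ℂ) * (μ₂ a₂ : ℂ) * (μ'₂ d₂ : ℂ) *
          (Real.sqrt ‖((a₁ : ℚ_[p]) * (a₂ : ℚ_[p])) /
            ((d₁ : ℚ_[p]) * (d₂ : ℚ_[p]))‖ : ℂ) * H g₁ g₂)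
    (hHw : ∀ g : GL (Fin 2) ℚ_[p], H g (wEl p * g) = h g)
    (k₁ k₂ : GL (Fin 2) ℚ_[p])
    (e0 : mat p k₂ 1 0 * mat p k₁ 1 1 - mat p k₂ 1 1 * mat p k₁ 1 0 ≠ 0)
    (a₁ a₂ : ℚ_[p]ˣ)
    (ha₁ : (a₁ : ℚ_[p]) = (mat p k₁).det /
      (mat p k₂ 1 0 * mat p k₁ 1 1 - mat p k₂ 1 1 * mat p k₁ 1 0))
    (ha₂ : (a₂ : ℚ_[p]) = -(mat p k₂).det /
      (mat p k₂ 1 0 * mat p k₁ 1 1 - mat p k₂ 1 1 * mat p k₁ 1 0)) :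
    H k₁ k₂ = (μ₁ a₁ : ℂ) * (μ₂ a₂ : ℂ) * (Real.sqrt ‖(a₁ : ℚ_[p]) * (a₂ : ℚ_[p])‖ : ℂ) *
      h (gEl p k₁ k₂ e0) := by
  set g := gEl p k₁ k₂ e0 with hg
  have mg : mat p g = !![mat p k₂ 1 0, mat p k₂ 1 1; mat p k₁ 1 0, mat p k₁ 1 1] := rfl
  have mw : mat p (wEl p * g) =
      !![mat p k₁ 1 0, mat p k₁ 1 1; mat p k₂ 1 0, mat p k₂ 1 1] := by
    rw [mat_mul, mg, wEl, mat_mk]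
    ext i j
    fin_cases i <;> fin_cases j <;> simp [Matrix.mul_apply, Fin.sum_univ_two]
  obtain ⟨x1, x2, x3⟩ := borel_step p k₁ g (by rw [mg]; rfl) (by rw [mg]; rfl)
  obtain ⟨y1, y2, y3⟩ := borel_step p k₂ (wEl p * g) (by rw [mw]; rfl) (by rw [mw]; rfl)
  rw [mg, Matrix.det_fin_two_of] at x2
  rw [mw, Matrix.det_fin_two_of] at y2
  have := hHB (k₁ * g⁻¹) (k₂ * (wEl p * g)⁻¹) g (wEl p * g) a₁ 1 a₂ 1 x1 (by rw [x2, ha₁])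
    (by rw [x3]; rfl) y1 (by rw [y2, ha₂, neg_div, ← div_neg]; congr 1; ring) (by rw [y3]; rfl)
  rw [inv_mul_cancel_right, inv_mul_cancel_right, hHw] at this
  simpa using this

theorem inK_row {k : GL (Fin 2) ℚ_[p]} (hk : inK p k) (i j : Fin 2) (h : ‖mat p k 1 i‖ < 1)
    (hij : i ≠ j) : ‖mat p k 1 j‖ = 1 ∧ ‖mat p k 0 j.rev‖ = 1 := by
  obtain ⟨h1, h2⟩ := hk
  have key : ∀ a b c d : ℚ_[p], ‖a‖ ≤ 1 → ‖b‖ ≤ 1 → ‖c‖ < 1 → ‖d‖ ≤ 1 →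
      ‖a * d - b * c‖ = 1 → ‖d‖ = 1 ∧ ‖a‖ = 1 := by
    intro a b c d ha hb hc hd he
    have hbc : ‖b * c‖ < 1 := by
      rw [norm_mul]; nlinarith [norm_nonneg b, norm_nonneg c]
    have had : ‖a‖ * ‖d‖ = 1 := by
      have h3 := IsUltrametricDist.norm_add_le_max (a * d - b * c) (b * c)
      have h4 := padic_sub_le p (a * d) (b * c)
      rw [he] at h4
      have : 1 ≤ ‖a * d‖ := by
        rcases le_max_iff.1 h4 with h | h
        · exact h
        · linarith
      rw [norm_mul] at this
      nlinarith [norm_nonneg a, norm_nonneg d]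
    constructor <;> nlinarith [norm_nonneg a, norm_nonneg d]
  rw [Matrix.det_fin_two] at h2
  fin_cases i <;> fin_cases j
  · exact absurd rfl hij
  · exact key _ _ _ _ (h1 0 0) (h1 0 1) h (h1 1 1) h2
  · refine key _ _ _ _ (h1 0 1) (h1 0 0) h (h1 1 0) ?_
    exact (norm_sub_rev _ _).trans h2
  · exact absurd rfl hij

theorem not_inI_one {k : GL (Fin 2) ℚ_[p]} (hk : inK p k) :
    ¬ inI p 1 k ↔ ‖mat p k 1 0‖ = 1 := by
  have hp : (1 : ℝ) < p := by exact_mod_cast (Fact.out : p.Prime).one_lt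
  constructor
  · intro h
    by_contra hc
    have hlt := lt_of_le_of_ne (hk.1 1 0) hc
    apply h
    obtain ⟨h1, h2⟩ := inK_row p hk 0 1 hlt (by decide)
    refine ⟨hk, Or.inr ⟨h2, h1, ?_⟩⟩
    have := (Padic.norm_le_pow_iff_norm_lt_pow_add_one (mat p k 1 0) (-1)).2 (by simpa using hlt)
    simpa using this
  · rintro h ⟨_, h0 | ⟨_, _, h1⟩⟩
    · omega
    · rw [h] at h1
      have : (p : ℝ) ^ (-((1 : ℕ) : ℤ)) < 1 := by
        simpa using inv_lt_one_of_one_lt₀ hp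
      linarith

theorem zpow_neg_lt (n : ℕ) (hn : 1 ≤ n) : (p : ℝ) ^ (-(n : ℤ)) < 1 := by
  have hp : (1 : ℝ) < p := by exact_mod_cast (Fact.out : p.Prime).one_lt
  exact zpow_lt_one_of_neg₀ hp (by omega)

/-- Lemma «FV»: the values of `H = ext(h)` on `K × K`, where `h` is the
function supported on `T J_n` with `h ≡ 1` on `J_n`. Here `n ≥ 1`,
`μ₁` and `μ'₂` are unramified and `μ₂` is trivial on `1 + p^n ℤ_p`. -/
theorem stmt11 (n : ℕ) (hn : 1 ≤ n)
    (μ₁ μ'₁ μ₂ μ'₂ : ℚ_[p]ˣ →* ℂˣ)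
    (hμ₁ : Unramified p μ₁) (hμ'₂ : Unramified p μ'₂)
    (hμ₂ : TrivialOnOnePlusP p n μ₂)
    (h : GL (Fin 2) ℚ_[p] → ℂ)
    (hhT : ∀ (t g : GL (Fin 2) ℚ_[p]) (a d : ℚ_[p]ˣ),
      inT p t → mat p t 0 0 = a → mat p t 1 1 = d →
      h (t * g) = (μ₁ a : ℂ) * (μ'₁ d : ℂ) * (μ'₂ a : ℂ) * (μ₂ d : ℂ) * h g)
    (hhJ : ∀ j : GL (Fin 2) ℚ_[p], inJ p n j → h j = 1)
    (hhsupp : ∀ g : GL (Fin 2) ℚ_[p],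
      (¬ ∃ t j : GL (Fin 2) ℚ_[p], inT p t ∧ inJ p n j ∧ g = t * j) → h g = 0)
    (H : GL (Fin 2) ℚ_[p] → GL (Fin 2) ℚ_[p] → ℂ)
    (hHB : ∀ (b₁ b₂ g₁ g₂ : GL (Fin 2) ℚ_[p]) (a₁ d₁ a₂ d₂ : ℚ_[p]ˣ),
      mat p b₁ 1 0 = 0 → mat p b₁ 0 0 = a₁ → mat p b₁ 1 1 = d₁ →
      mat p b₂ 1 0 = 0 → mat p b₂ 0 0 = a₂ → mat p b₂ 1 1 = d₂ →
      H (b₁ * g₁) (b₂ * g₂) =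
        (μ₁ a₁ : ℂ) * (μ'₁ d₁ : ℂ) * (μ₂ a₂ : ℂ) * (μ'₂ d₂ : ℂ) *
          (Real.sqrt ‖((a₁ : ℚ_[p]) * (a₂ : ℚ_[p])) /
            ((d₁ : ℚ_[p]) * (d₂ : ℚ_[p]))‖ : ℂ) * H g₁ g₂)
    (hHdiag : ∀ g : GL (Fin 2) ℚ_[p], H g g = 0)
    (hHw : ∀ g : GL (Fin 2) ℚ_[p], H g (wEl p * g) = h g) :
    ∀ k₁ k₂ : GL (Fin 2) ℚ_[p],
      (∀ (d₁ u : ℚ_[p]ˣ), inI p n k₁ → inK p k₂ → ¬ inI p 1 k₂ →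
        mat p k₁ 1 1 = d₁ →
        (u : ℚ_[p]) = -(mat p k₂).det / mat p k₂ 1 0 →
        H k₁ k₂ = (μ'₁ d₁ : ℂ) * (μ₂ u : ℂ)) ∧
      (inK p k₁ → inK p k₂ → ¬ (inI p n k₁ ∧ ¬ inI p 1 k₂) →
        H k₁ k₂ = 0) := by
  intro k₁ k₂
  have hpn := zpow_neg_lt p n hn
  constructor
  · intro d₁ u hk₁ hk₂ hnI hd₁ hu
    have hc₂ := (not_inI_one p hk₂).1 hnI
    obtain ⟨hK₁, h0 | ⟨_, hd, hc⟩⟩ := hk₁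
    · omega
    have hdne : mat p k₁ 1 1 ≠ 0 := by
      intro h0; rw [h0, norm_zero] at hd; norm_num at hd
    have hcne : mat p k₂ 1 0 ≠ 0 := by
      intro h0; rw [h0, norm_zero] at hc₂; norm_num at hc₂
    have hd2 := hk₂.1 1 1
    have hdc : ‖mat p k₂ 1 1 * mat p k₁ 1 0‖ ≤ (p : ℝ) ^ (-(n : ℤ)) := by
      rw [norm_mul]
      nlinarith [norm_nonneg (mat p k₂ 1 1), norm_nonneg (mat p k₁ 1 0)]
    have hcd : ‖mat p k₂ 1 0 * mat p k₁ 1 1‖ = 1 := by rw [norm_mul, hc₂, hd, one_mul]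
    have hen : ‖mat p k₂ 1 0 * mat p k₁ 1 1 - mat p k₂ 1 1 * mat p k₁ 1 0‖ = 1 := by
      have h3 := padic_sub_le p (mat p k₂ 1 0 * mat p k₁ 1 1)
        (mat p k₂ 1 1 * mat p k₁ 1 0)
      have h4 := IsUltrametricDist.norm_add_le_max
        (mat p k₂ 1 0 * mat p k₁ 1 1 - mat p k₂ 1 1 * mat p k₁ 1 0)
        (mat p k₂ 1 1 * mat p k₁ 1 0)
      rw [sub_add_cancel, hcd] at h4
      rw [hcd] at h3
      apply le_antisymm
      · exact h3.trans (max_le le_rfl (by linarith))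
      · rcases le_max_iff.1 h4 with h | h
        · exact h
        · linarith
    have e0 : mat p k₂ 1 0 * mat p k₁ 1 1 - mat p k₂ 1 1 * mat p k₁ 1 0 ≠ 0 := by
      intro h0; rw [h0, norm_zero] at hen; norm_num at hen
    have hD₁ := mat_det_ne p k₁
    have hD₂ := mat_det_ne p k₂
    set a₁ : ℚ_[p]ˣ := Units.mk0 _ (div_ne_zero hD₁ e0) with ha₁
    set a₂ : ℚ_[p]ˣ := Units.mk0 _ (div_ne_zero (neg_ne_zero.2 hD₂) e0) with ha₂
    rw [H_open_case p μ₁ μ'₁ μ₂ μ'₂ h H hHB hHw k₁ k₂ e0 a₁ a₂ rfl rfl]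
    have na₁ : ‖(a₁ : ℚ_[p])‖ = 1 := by
      rw [ha₁, Units.val_mk0, norm_div, hen, hK₁.2, div_one]
    have na₂ : ‖(a₂ : ℚ_[p])‖ = 1 := by
      rw [ha₂, Units.val_mk0, norm_div, norm_neg, hen, hk₂.2, div_one]
    set c : ℚ_[p]ˣ := Units.mk0 _ hcne with hcdef
    -- decomposition of g
    have htd : (!![mat p k₂ 1 0, 0; 0, mat p k₁ 1 1]).det ≠ 0 := by
      rw [Matrix.det_fin_two_of]; simp [hcne, hdne]
    have hjd : (!![1, mat p k₂ 1 1 / mat p k₂ 1 0; mat p k₁ 1 0 / mat p k₁ 1 1, 1]).det ≠ 0 := by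
      rw [Matrix.det_fin_two_of]
      intro h0
      apply e0
      field_simp at h0
      linear_combination h0
    have hdec : gEl p k₁ k₂ e0 = Matrix.GeneralLinearGroup.mkOfDetNeZero _ htd *
        Matrix.GeneralLinearGroup.mkOfDetNeZero _ hjd := by
      apply Units.ext
      change mat p (gEl p k₁ k₂ e0) = mat p _
      rw [mat_mul, mat_mk, mat_mk, gEl, mat_mk]
      ext i j
      fin_cases i <;> fin_cases j <;> simp [Matrix.mul_apply, Fin.sum_univ_two] <;> field_simp
    have hJ : h (Matrix.GeneralLinearGroup.mkOfDetNeZero _ hjd) = 1 := by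
      apply hhJ
      refine ⟨rfl, rfl, ?_, ?_⟩
      · rw [mat_mk]
        change ‖mat p k₂ 1 1 / mat p k₂ 1 0‖ ≤ 1
        rw [norm_div, hc₂, div_one]; exact hd2
      · rw [mat_mk]
        change ‖mat p k₁ 1 0 / mat p k₁ 1 1‖ ≤ _
        rw [norm_div, hd, div_one]; exact hc
    rw [hdec, hhT (Matrix.GeneralLinearGroup.mkOfDetNeZero _ htd) _ c d₁ ⟨rfl, rfl⟩ rfl hd₁, hJ, hμ₁ a₁ na₁, hμ₁ c hc₂, hμ'₂ c hc₂,
      norm_mul, na₁, na₂]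
    have hmu : μ₂ u = μ₂ a₂ * μ₂ d₁ := by
      have : μ₂ (u * (a₂ * d₁)⁻¹) = 1 := by
        apply hμ₂
        have e : ((u * (a₂ * d₁)⁻¹ : ℚ_[p]ˣ) : ℚ_[p]) - 1 =
            -(mat p k₂ 1 1 * mat p k₁ 1 0) / (mat p k₂ 1 0 * mat p k₁ 1 1) := by
          rw [Units.val_mul, Units.val_inv_eq_inv_val, Units.val_mul, hu, ← hd₁, ha₂, Units.val_mk0]
          field_simp
          ring
        rw [e, norm_div, norm_neg, hcd, div_one]
        exact hdc
      rw [map_mul, map_inv, mul_inv_eq_one, map_mul] at this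
      exact this
    rw [hmu]
    simp
    ring
  · intro hk₁ hk₂ hnot
    by_cases e0 : mat p k₂ 1 0 * mat p k₁ 1 1 - mat p k₂ 1 1 * mat p k₁ 1 0 = 0
    · exact H_diag_case p μ₁ μ'₁ μ₂ μ'₂ H hHB hHdiag k₁ k₂ e0
    have hD₁ := mat_det_ne p k₁
    have hD₂ := mat_det_ne p k₂
    rw [H_open_case p μ₁ μ'₁ μ₂ μ'₂ h H hHB hHw k₁ k₂ e0 (Units.mk0 _ (div_ne_zero hD₁ e0))
      (Units.mk0 _ (div_ne_zero (neg_ne_zero.2 hD₂) e0)) rfl rfl]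
    rw [hhsupp, mul_zero]
    rintro ⟨t, j, ⟨ht0, ht1⟩, ⟨hj0, hj1, hj2, hj3⟩, hg⟩
    have htd := mat_det_ne p t
    rw [Matrix.det_fin_two, ht0, mul_zero, sub_zero] at htd
    have hm : mat p (gEl p k₁ k₂ e0) = mat p t * mat p j := by rw [hg, mat_mul]
    have ent : ∀ i l, mat p (gEl p k₁ k₂ e0) i l =
        mat p t i 0 * mat p j 0 l + mat p t i 1 * mat p j 1 l := by
      intro i l; rw [hm, Matrix.mul_apply, Fin.sum_univ_two]
    have q1 : mat p k₂ 1 0 = mat p t 0 0 := by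
      have := ent 0 0; rw [ht1, hj0] at this; simpa [gEl, mat_mk] using this
    have q2 : mat p k₂ 1 1 = mat p t 0 0 * mat p j 0 1 := by
      have := ent 0 1; rw [ht1] at this; simpa [gEl, mat_mk] using this
    have q3 : mat p k₁ 1 0 = mat p t 1 1 * mat p j 1 0 := by
      have := ent 1 0; rw [ht0] at this; simpa [gEl, mat_mk] using this
    have q4 : mat p k₁ 1 1 = mat p t 1 1 := by
      have := ent 1 1; rw [ht0, hj1] at this; simpa [gEl, mat_mk] using this
    rw [← q1] at q2
    rw [← q4] at q3
    apply hnot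
    have n3 : ‖mat p k₁ 1 0‖ ≤ (p : ℝ) ^ (-(n : ℤ)) := by
      rw [q3, norm_mul]
      nlinarith [hk₁.1 1 1, norm_nonneg (mat p k₁ 1 1), norm_nonneg (mat p j 1 0)]
    obtain ⟨r1, r2⟩ := inK_row p hk₁ 0 1 (lt_of_le_of_lt n3 hpn) (by decide)
    refine ⟨⟨hk₁, Or.inr ⟨r2, r1, n3⟩⟩, (not_inI_one p hk₂).2 ?_⟩
    by_contra hne
    have hlt := lt_of_le_of_ne (hk₂.1 1 0) hne
    have := (inK_row p hk₂ 0 1 hlt (by decide)).1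
    rw [q2, norm_mul] at this
    nlinarith [norm_nonneg (mat p k₂ 1 0), norm_nonneg (mat p j 0 1)]
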